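/- Let e = xy be a non-pendant edge of a tree T with ecc(x) ≥ ecc(y), and let T' be the tree obtained by subdividing e with a new vertex r. Let a be the eccentricity of x in the connected component of T − y containing x. Then π_t(T',r) = π_t(T,x) + 2^a. -/

import Mathlib

open SimpleGraph

/-- A single pebbling step: remove two pebbles from `u`, add one to a neighbor `v`. -/
def PebStep {V : Type} (G : SimpleGraph V) (C C' : V → ℕ) : Prop :=
  ∃ u v : V, G.Adj u v ∧ 2 ≤ C u ∧
    C' u + 2 = C u ∧ C' v = C v + 1 ∧ ∀ w, w ≠ u → w ≠ v → C' w = C w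

/-- `C` is `t`-fold `r`-solvable. -/
def TSolvable {V : Type} (G : SimpleGraph V) (C : V → ℕ) (r : V) (t : ℕ) : Prop :=
  ∃ C', Relation.ReflTransGen (PebStep G) C C' ∧ t ≤ C' r

/-- The `t`-pebbling number of `G` rooted at `r`. -/
noncomputable def piT {V : Type} (G : SimpleGraph V) (r : V) (t : ℕ) : ℕ :=
  sInf {s | ∀ C : V → ℕ, s ≤ ∑ᶠ v, C v → TSolvable G C r t}

/-- The pebbling number of `G` rooted at `r`. -/
noncomputable def pin {V : Type} (G : SimpleGraph V) (r : V) : ℕ := piT G r 1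

/-- The `t`-pebbling number of `G`. -/
noncomputable def piGt {V : Type} (G : SimpleGraph V) (t : ℕ) : ℕ := ⨆ r, piT G r t

/-- The pebbling number of `G`. -/
noncomputable def piG {V : Type} (G : SimpleGraph V) : ℕ := ⨆ r, pin G r

/-- Eccentricity of `r`. -/
noncomputable def eccG {V : Type} (G : SimpleGraph V) (r : V) : ℕ := ⨆ v, G.dist r v

/-- Diameter of `G`. -/
noncomputable def diamG {V : Type} (G : SimpleGraph V) : ℕ := ⨆ u, eccG G u

section RootedForest

variable {V : Type} [Fintype V] [DecidableEq V]

/-- `p` is a parent function and `h` a height function presenting `G` as a tree rooted at `r`. -/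
structure RootedBy (G : SimpleGraph V) (r : V) (p : V → V) (h : V → ℕ) : Prop where
  adj_iff : ∀ u v, G.Adj u v ↔ (u ≠ r ∧ p u = v) ∨ (v ≠ r ∧ p v = u)
  height_lt : ∀ v, v ≠ r → h v + 1 ≤ h (p v)
  exists_child : ∀ v, 0 < h v → ∃ c, c ≠ r ∧ p c = v ∧ h c + 1 = h v

/-- A flow certificate bounding by `q` the number of pebbles which can reach the root `r`:
`n v` bounds the number of pebbles moved from `v` to its parent. -/
def FlowBound (r : V) (p : V → V) (q : ℕ) (C : V → ℕ) : Prop :=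
  ∃ n : V → ℕ, (∀ v, v ≠ r → C v + ∑ c with c ≠ r ∧ p c = v, n c ≤ 2 * n v + 1) ∧
    C r + ∑ c with c ≠ r ∧ p c = r, n c ≤ q

/-- The weight of a configuration, a pebble at `v` counting `2 ^ h v`. -/
def pebWeight (h : V → ℕ) (C : V → ℕ) : ℕ := ∑ v, C v * 2 ^ h v

omit [DecidableEq V] in
lemma sum_le_pebWeight (h C : V → ℕ) : ∑ v, C v ≤ pebWeight h C :=
  Finset.sum_le_sum fun v _ => Nat.le_mul_of_pos_right _ (by positivity)

omit [Fintype V] in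
lemma sum_update_add (f g : V → ℕ) (u : V) (k : ℕ) (s : Finset V) :
    ∑ v ∈ s, Function.update f u k v * g v + (if u ∈ s then f u * g u else 0) =
      ∑ v ∈ s, f v * g v + (if u ∈ s then k * g u else 0) := by
  induction s using Finset.induction_on with
  | empty => simp
  | insert a s ha ih =>
    rw [Finset.sum_insert ha, Finset.sum_insert ha]
    by_cases hu : u = a
    · subst hu
      simp [ha] at ih ⊢
      omega
    · have : a ≠ u := fun h => hu h.symm
      simp [hu, this] at ih ⊢
      omega

omit [Fintype V] in
lemma sum_update_add' (f : V → ℕ) (u : V) (k : ℕ) (s : Finset V) :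
    ∑ v ∈ s, Function.update f u k v + (if u ∈ s then f u else 0) =
      ∑ v ∈ s, f v + (if u ∈ s then k else 0) := by
  simpa using sum_update_add f (fun _ => 1) u k s

omit [Fintype V] in
lemma PebStep.eq_update {G : SimpleGraph V} {C C' : V → ℕ} (hs : PebStep G C C') :
    ∃ u v, G.Adj u v ∧ 2 ≤ C u ∧
      C' = Function.update (Function.update C u (C u - 2)) v (C v + 1) := by
  obtain ⟨u, v, ha, h2, hu, hv, hw⟩ := hs
  refine ⟨u, v, ha, h2, funext fun w => ?_⟩
  have := ha.ne
  by_cases h1 : w = v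
  · subst h1; simp [hv]
  · by_cases h3 : w = u
    · subst h3; simp [h1]; omega
    · simp [h1, h3, hw w h3 h1]

omit [Fintype V] in
lemma PebStep.of_update {G : SimpleGraph V} {C : V → ℕ} {u v : V} (ha : G.Adj u v)
    (h2 : 2 ≤ C u) :
    PebStep G C (Function.update (Function.update C u (C u - 2)) v (C v + 1)) := by
  have := ha.ne
  refine ⟨u, v, ha, h2, ?_, by simp, fun w h1 h3 => by simp [h1, h3]⟩
  simp [this]; omega

lemma sum_move (C g : V → ℕ) {u v : V} (huv : u ≠ v) (h2 : 2 ≤ C u) :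
    ∑ w, Function.update (Function.update C u (C u - 2)) v (C v + 1) w * g w + 2 * g u =
      ∑ w, C w * g w + g v := by
  have h1 := sum_update_add (Function.update C u (C u - 2)) g v (C v + 1) Finset.univ
  have h3 := sum_update_add C g u (C u - 2) Finset.univ
  obtain ⟨k, hk⟩ := Nat.exists_eq_add_of_le h2
  simp [huv.symm, hk, add_mul] at h1 h3 ⊢
  omega

namespace RootedBy

variable {G : SimpleGraph V} {r : V} {p : V → V} {h : V → ℕ}

omit [Fintype V] [DecidableEq V] in
lemma parent_ne (H : RootedBy G r p h) {v : V} (hv : v ≠ r) : p v ≠ v := by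
  intro e
  have := H.height_lt v hv
  rw [e] at this
  omega

omit [Fintype V] [DecidableEq V] in
lemma adj_parent (H : RootedBy G r p h) {v : V} (hv : v ≠ r) : G.Adj v (p v) :=
  (H.adj_iff v (p v)).2 (Or.inl ⟨hv, rfl⟩)

/-- Greedy upward moves never lose weight, and stop with at most one pebble off the root. -/
lemma exists_terminal (H : RootedBy G r p h) (N : ℕ) (C : V → ℕ) (hN : ∑ v, C v ≤ N) :
    ∃ C', Relation.ReflTransGen (PebStep G) C C' ∧ pebWeight h C ≤ pebWeight h C' ∧
      ∀ v, v ≠ r → C' v ≤ 1 := by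
  induction N generalizing C with
  | zero =>
    refine ⟨C, .refl, le_rfl, fun v _ => ?_⟩
    have := Finset.single_le_sum (f := C) (fun i _ => Nat.zero_le _) (Finset.mem_univ v)
    omega
  | succ N ih =>
    by_cases hC : ∀ v, v ≠ r → C v ≤ 1
    · exact ⟨C, .refl, le_rfl, hC⟩
    push Not at hC
    obtain ⟨v, hv, h2⟩ := hC
    have ha := H.adj_parent hv
    have hs := PebStep.of_update ha h2
    have hsum := sum_move C (fun _ => 1) ha.ne h2
    have hw := sum_move C (fun w => 2 ^ h w) ha.ne h2
    simp only [mul_one] at hsum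
    obtain ⟨C', h1, h3, h4⟩ := ih (Function.update (Function.update C v (C v - 2)) (p v) (C (p v) + 1)) (by omega)
    refine ⟨C', .head hs h1, le_trans ?_ h3, h4⟩
    have hle : 2 ^ (h v + 1) ≤ 2 ^ h (p v) := Nat.pow_le_pow_right (by norm_num) (H.height_lt v hv)
    rw [pow_succ] at hle
    unfold pebWeight
    omega

lemma tsolvable_of_lt (H : RootedBy G r p h) {t : ℕ} {C : V → ℕ}
    (hC : (t - 1) * 2 ^ h r + ∑ v with v ≠ r, 2 ^ h v < ∑ v, C v) : TSolvable G C r t := by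
  obtain ⟨C', h1, h2, h3⟩ := H.exists_terminal _ C le_rfl
  refine ⟨C', h1, ?_⟩
  by_contra hlt
  have h4 := sum_le_pebWeight h C
  have h5 : pebWeight h C' = C' r * 2 ^ h r + ∑ v with v ≠ r, C' v * 2 ^ h v := by
    unfold pebWeight
    rw [Finset.filter_ne', ← Finset.add_sum_erase _ _ (Finset.mem_univ r)]
  have h6 : ∑ v with v ≠ r, C' v * 2 ^ h v ≤ ∑ v with v ≠ r, 2 ^ h v := by
    refine Finset.sum_le_sum fun v hv => ?_
    have := h3 v (by simpa using hv)
    simpa using Nat.mul_le_mul_right (2 ^ h v) this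
  have h7 : C' r * 2 ^ h r ≤ (t - 1) * 2 ^ h r := Nat.mul_le_mul_right _ (by omega)
  omega

lemma flowBound_step (H : RootedBy G r p h) {q : ℕ} {C C' : V → ℕ}
    (hs : PebStep G C C') (hf : FlowBound r p q C) : FlowBound r p q C' := by
  obtain ⟨u, v, ha, h2, rfl⟩ := hs.eq_update
  obtain ⟨n, hn, hr⟩ := hf
  have huv := ha.ne
  rcases (H.adj_iff u v).1 ha with ⟨hu, rfl⟩ | ⟨hv, rfl⟩
  · have hpos : 1 ≤ n u := by
      have := hn u hu
      omega
    have key := fun w => sum_update_add' n u (n u - 1) {c | c ≠ r ∧ p c = w}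
    refine ⟨Function.update n u (n u - 1), fun w hw => ?_, ?_⟩
    · have k := key w
      have hnw := hn w hw
      by_cases h1 : w = p u
      · subst h1
        simp [hu, huv.symm] at k hnw ⊢
        omega
      · by_cases h3 : w = u
        · subst h3
          simp [huv.symm] at k hnw ⊢
          simp [h1]
          omega
        · have h4 : ¬ (p u = w) := fun e => h1 e.symm
          simp [h4] at k hnw ⊢
          simp [h1, h3]
          omega
    · have k := key r
      by_cases h1 : p u = r
      · simp [h1, hu] at k hr ⊢
        omega
      · have h4 : ¬ (r = p u) := fun e => h1 e.symm
        have h5 : ¬ (r = u) := fun e => hu e.symm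
        simp [h1] at k hr ⊢
        simp [h4, h5]
        omega
  · have key := fun w => sum_update_add' n v (n v + 1) {c | c ≠ r ∧ p c = w}
    refine ⟨Function.update n v (n v + 1), fun w hw => ?_, ?_⟩
    · have k := key w
      have hnw := hn w hw
      by_cases h1 : w = p v
      · subst h1
        simp [hv, huv] at k hnw ⊢
        omega
      · by_cases h3 : w = v
        · subst h3
          simp [huv] at k hnw ⊢
          omega
        · have h4 : ¬ (p v = w) := fun e => h1 e.symm
          simp [h4] at k hnw ⊢
          simp [h1, h3]
          omega
    · have k := key r
      have h5 : ¬ (r = v) := fun e => hv e.symm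
      by_cases h1 : p v = r
      · rw [h1] at h2
        simp [h1, hv] at k hr ⊢
        simp [h5]
        omega
      · have h4 : ¬ (r = p v) := fun e => h1 e.symm
        simp [h1] at k hr ⊢
        simp [h4, h5]
        omega

lemma flowBound_le (H : RootedBy G r p h) {q : ℕ} {C C' : V → ℕ}
    (hs : Relation.ReflTransGen (PebStep G) C C') (hf : FlowBound r p q C) : C' r ≤ q := by
  have : FlowBound r p q C' := by
    induction hs with
    | refl => exact hf
    | tail _ hs ih => exact H.flowBound_step hs ih
  obtain ⟨n, -, hr⟩ := this
  omega

/-- Splitting a pebble at `p c` into two pebbles at `c` preserves the flow certificate. -/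
lemma flowBound_split (H : RootedBy G r p h) {q : ℕ} {C : V → ℕ} {c : V} (hc : c ≠ r)
    (h1 : 1 ≤ C (p c)) (hf : FlowBound r p q C) :
    FlowBound r p q (Function.update (Function.update C (p c) (C (p c) - 1)) c (C c + 2)) := by
  obtain ⟨n, hn, hr⟩ := hf
  have hne := H.parent_ne hc
  have key := fun w => sum_update_add' n c (n c + 1) {d | d ≠ r ∧ p d = w}
  refine ⟨Function.update n c (n c + 1), fun w hw => ?_, ?_⟩
  · have k := key w
    have hnw := hn w hw
    by_cases h2 : w = p c
    · subst h2
      simp [hc, hne] at k hnw ⊢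
      omega
    · by_cases h3 : w = c
      · subst h3
        simp [hne] at k hnw ⊢
        omega
      · have h4 : ¬ (p c = w) := fun e => h2 e.symm
        simp [h4] at k hnw ⊢
        simp [h2, h3]
        omega
  · have k := key r
    have h5 : ¬ (r = c) := fun e => hc e.symm
    by_cases h2 : p c = r
    · rw [h2] at h1
      simp [h2, hc] at k hr ⊢
      simp [h5]
      omega
    · have h4 : ¬ (r = p c) := fun e => h2 e.symm
      simp [h2] at k hr ⊢
      simp [h4, h5]
      omega

/-- Splitting pebbles downward along heavy children ends in a configuration whose size is the
weight of the initial one. -/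
lemma exists_flowBound_sum_eq (H : RootedBy G r p h) {q : ℕ} (N : ℕ) (C : V → ℕ)
    (hN : pebWeight h C ≤ N + ∑ v, C v) (hf : FlowBound r p q C) :
    ∃ C', FlowBound r p q C' ∧ ∑ v, C' v = pebWeight h C := by
  induction N generalizing C with
  | zero =>
    have := sum_le_pebWeight h C
    exact ⟨C, hf, by omega⟩
  | succ N ih =>
    by_cases hC : ∀ v, 0 < h v → C v = 0
    · refine ⟨C, hf, Finset.sum_congr rfl fun v _ => ?_⟩
      rcases Nat.eq_zero_or_pos (h v) with h0 | h0
      · simp [h0]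
      · simp [hC v h0]
    push Not at hC
    obtain ⟨v, hv, h0⟩ := hC
    obtain ⟨c, hc, rfl, hh⟩ := H.exists_child v hv
    have hne := H.parent_ne hc
    have hf' := H.flowBound_split hc (by omega) hf
    set C₁ := Function.update (Function.update C (p c) (C (p c) - 1)) c (C c + 2) with hC₁
    have hsum : ∀ g : V → ℕ, ∑ w, C₁ w * g w + g (p c) = ∑ w, C w * g w + 2 * g c := by
      intro g
      have e1 := sum_update_add (Function.update C (p c) (C (p c) - 1)) g c (C c + 2) Finset.univ
      have e2 := sum_update_add C g (p c) (C (p c) - 1) Finset.univ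
      obtain ⟨k, hk⟩ := Nat.exists_eq_add_of_le' (Nat.pos_of_ne_zero h0)
      simp [hne.symm, hk, add_mul] at e1 e2
      simp only [hC₁, hk, Nat.add_sub_cancel]
      omega
    have s1 := hsum fun _ => 1
    have s2 : pebWeight h C₁ + 2 ^ h (p c) = pebWeight h C + 2 * 2 ^ h c := hsum fun w => 2 ^ h w
    simp only [mul_one] at s1
    rw [← hh, pow_succ] at s2
    have s3 : pebWeight h C₁ = pebWeight h C := by omega
    obtain ⟨C', h1, h2⟩ := ih C₁ (by omega) hf'
    exact ⟨C', h1, by omega⟩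

theorem piT_eq (H : RootedBy G r p h) {t : ℕ} (ht : 1 ≤ t) :
    piT G r t = (t - 1) * 2 ^ h r + ∑ v with v ≠ r, 2 ^ h v + 1 := by
  unfold piT
  apply le_antisymm
  · refine Nat.sInf_le fun C hC => H.tsolvable_of_lt ?_
    rw [finsum_eq_sum_of_fintype] at hC
    omega
  · refine le_csInf ⟨(t - 1) * 2 ^ h r + ∑ v with v ≠ r, 2 ^ h v + 1,
      fun C hC => H.tsolvable_of_lt (t := t) ?_⟩ fun s hs => ?_
    · rw [finsum_eq_sum_of_fintype] at hC
      exact hC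
    · by_contra! hlt
      have hf : FlowBound r p (t - 1) (fun v => if v = r then t - 1 else 1) :=
        ⟨fun _ => 0, fun v hv => by simp [hv], by simp⟩
      obtain ⟨C', h1, h2⟩ := H.exists_flowBound_sum_eq _ _ (Nat.le_add_right _ _) hf
      have h3 : pebWeight h (fun v => if v = r then t - 1 else 1) =
          (t - 1) * 2 ^ h r + ∑ v with v ≠ r, 2 ^ h v := by
        unfold pebWeight
        rw [Finset.filter_ne', ← Finset.add_sum_erase _ _ (Finset.mem_univ r)]
        simp only [if_true]
        congr 1
        refine Finset.sum_congr rfl fun v hv => ?_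
        simp [Finset.ne_of_mem_erase hv]
      obtain ⟨D, h4, h5⟩ := hs C' (by rw [finsum_eq_sum_of_fintype]; omega)
      have := H.flowBound_le h4 h1
      omega

end RootedBy

end RootedForest

section TreeDistance

variable {V : Type} {T : SimpleGraph V}

lemma SimpleGraph.IsTree.eq_of_adj_of_dist (hT : T.IsTree) {r v a b : V} (ha : T.Adj v a)
    (hb : T.Adj v b) (hda : T.dist r a + 1 = T.dist r v) (hdb : T.dist r b + 1 = T.dist r v) :
    a = b := by
  obtain ⟨qa, hqa⟩ := hT.connected.exists_walk_length_eq_dist a r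
  obtain ⟨qb, hqb⟩ := hT.connected.exists_walk_length_eq_dist b r
  have pa : (Walk.cons ha qa).IsPath := Walk.isPath_of_length_eq_dist _ (by
    rw [Walk.length_cons, hqa, T.dist_comm, hda, T.dist_comm])
  have pb : (Walk.cons hb qb).IsPath := Walk.isPath_of_length_eq_dist _ (by
    rw [Walk.length_cons, hqb, T.dist_comm, hdb, T.dist_comm])
  have := congrArg (fun q : T.Walk v r => q.snd) ((hT.existsUnique_path v r).unique pa pb)
  simpa using this

lemma SimpleGraph.Connected.exists_adj_dist_add_one (hT : T.Connected) {u v : V} (h : u ≠ v) :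
    ∃ w, T.Adj u w ∧ T.dist w v + 1 = T.dist u v := by
  obtain ⟨q, hq⟩ := hT.exists_walk_length_eq_dist u v
  cases q with
  | nil => exact absurd rfl h
  | @cons _ w _ ha q =>
    refine ⟨w, ha, ?_⟩
    have h1 := T.dist_le q
    have h2 := hT.dist_triangle (u := u) (v := w) (w := v)
    rw [dist_eq_one_iff_adj.2 ha] at h2
    rw [Walk.length_cons] at hq
    omega

open Classical in
/-- The neighbor of `v` closer to the root `r`. -/
noncomputable def treeParent (T : SimpleGraph V) (r v : V) : V :=
  if h : ∃ w, T.Adj v w ∧ T.dist r w + 1 = T.dist r v then h.choose else v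

/-- The height of `v` in `T` rooted at `r`: the largest distance from `v` to a descendant. -/
noncomputable def treeHeight [Fintype V] (T : SimpleGraph V) (r v : V) : ℕ :=
  Finset.sup {w | T.dist r w = T.dist r v + T.dist v w} (T.dist v)

lemma treeParent_spec (hT : T.Connected) {r v : V} (hv : v ≠ r) :
    T.Adj v (treeParent T r v) ∧ T.dist r (treeParent T r v) + 1 = T.dist r v := by
  have h : ∃ w, T.Adj v w ∧ T.dist r w + 1 = T.dist r v := by
    obtain ⟨w, h1, h2⟩ := hT.exists_adj_dist_add_one hv
    exact ⟨w, h1, by rwa [T.dist_comm, T.dist_comm (u := r)]⟩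
  rw [treeParent, dif_pos h]
  exact h.choose_spec

lemma treeParent_eq (hT : T.IsTree) {r v w : V} (ha : T.Adj v w)
    (hd : T.dist r w + 1 = T.dist r v) : treeParent T r v = w := by
  have hv : v ≠ r := by rintro rfl; simp at hd
  have h := treeParent_spec hT.connected hv
  exact hT.eq_of_adj_of_dist h.1 ha h.2 hd

variable [Fintype V]

lemma le_treeHeight {r v w : V} (h : T.dist r w = T.dist r v + T.dist v w) :
    T.dist v w ≤ treeHeight T r v :=
  Finset.le_sup (f := T.dist v) (by simpa using h)

lemma exists_dist_eq_treeHeight (T : SimpleGraph V) (r v : V) :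
    ∃ w, T.dist r w = T.dist r v + T.dist v w ∧ T.dist v w = treeHeight T r v := by
  have hne : (Finset.univ.filter fun w => T.dist r w = T.dist r v + T.dist v w).Nonempty :=
    ⟨v, by simp⟩
  obtain ⟨w, h1, h2⟩ := Finset.exists_mem_eq_sup _ hne (T.dist v)
  exact ⟨w, by simpa using h1, h2.symm⟩

lemma le_treeHeight_root (T : SimpleGraph V) (r w : V) : T.dist r w ≤ treeHeight T r r :=
  le_treeHeight (by simp)

lemma treeHeight_lt_parent (hT : T.Connected) {r v : V} (hv : v ≠ r) :
    treeHeight T r v + 1 ≤ treeHeight T r (treeParent T r v) := by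
  obtain ⟨w, h1, h2⟩ := exists_dist_eq_treeHeight T r v
  obtain ⟨ha, hd⟩ := treeParent_spec hT hv
  set u := treeParent T r v
  have h3 := hT.dist_triangle (u := u) (v := v) (w := w)
  rw [dist_eq_one_iff_adj.2 ha.symm] at h3
  have h4 := hT.dist_triangle (u := r) (v := u) (w := w)
  have h5 := le_treeHeight (T := T) (r := r) (v := u) (w := w) (by omega)
  omega

/-- The first step towards a descendant `w` of `v` is a child of `v` having `w` as descendant. -/
lemma exists_child_towards (hT : T.IsTree) {r v w : V} (hvw : v ≠ w)
    (h : T.dist r w = T.dist r v + T.dist v w) :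
    ∃ c, c ≠ r ∧ treeParent T r c = v ∧ T.dist c w + 1 = T.dist v w ∧
      T.dist v w ≤ treeHeight T r c + 1 := by
  obtain ⟨c, ha, hd⟩ := hT.connected.exists_adj_dist_add_one hvw
  have h1 := hT.connected.dist_triangle (u := r) (v := c) (w := w)
  have h2 := hT.connected.dist_triangle (u := r) (v := v) (w := c)
  rw [dist_eq_one_iff_adj.2 ha] at h2
  have h3 := le_treeHeight (T := T) (r := r) (v := c) (w := w) (by omega)
  refine ⟨c, ?_, treeParent_eq hT ha.symm (by omega), hd, by omega⟩
  rintro rfl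
  rw [T.dist_self] at h1
  omega

lemma rootedBy_tree (hT : T.IsTree) (r : V) :
    RootedBy T r (treeParent T r) (treeHeight T r) where
  adj_iff u v := by
    constructor
    · intro ha
      rcases hT.dist_eq_dist_add_one_of_adj r ha with h | h
      · exact Or.inl ⟨by rintro rfl; simp at h, treeParent_eq hT ha h.symm⟩
      · exact Or.inr ⟨by rintro rfl; simp at h, treeParent_eq hT ha.symm h.symm⟩
    · rintro (⟨h, rfl⟩ | ⟨h, rfl⟩)
      · exact (treeParent_spec hT.connected h).1
      · exact (treeParent_spec hT.connected h).1.symm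
  height_lt v hv := treeHeight_lt_parent hT.connected hv
  exists_child v hv := by
    obtain ⟨w, h1, h2⟩ := exists_dist_eq_treeHeight T r v
    have hvw : v ≠ w := by rintro rfl; rw [T.dist_self] at h2; omega
    obtain ⟨c, hc, rfl, -, h4⟩ := exists_child_towards hT hvw h1
    have := treeHeight_lt_parent hT.connected hc
    exact ⟨c, hc, rfl, by omega⟩

end TreeDistance

section DeleteVertex

variable {V : Type} {T : SimpleGraph V} {x y : V}

lemma dist_eq_of_reachable_induce (hT : T.IsTree) (hadj : T.Adj x y) {u v : {w : V | w ≠ y}}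
    (q : (T.induce {w | w ≠ y}).Walk u v) (hu : T.dist y u = T.dist x u + 1) :
    T.dist y v = T.dist x v + 1 := by
  induction q with
  | nil => exact hu
  | @cons u w _ ha q ih =>
    refine ih ?_
    have ha' : T.Adj u w := ha
    have huy : (u : V) ≠ y := u.2
    have hwy : (w : V) ≠ y := w.2
    by_contra hw
    have hxy := hadj.ne
    have e1 := hT.dist_eq_dist_add_one_of_adj w hadj
    have e2 := hT.dist_eq_dist_add_one_of_adj x ha'
    have e3 := hT.dist_eq_dist_add_one_of_adj y ha'
    rw [T.dist_comm (u := (w : V)), T.dist_comm (u := (w : V))] at e1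
    obtain ⟨z, hz1, hz2⟩ := hT.connected.exists_adj_dist_add_one hwy
    have e4 := hT.dist_eq_dist_add_one_of_adj x hz1
    have e5 := hT.connected.dist_triangle (u := x) (v := y) (w := z)
    rw [dist_eq_one_iff_adj.2 hadj] at e5
    rw [T.dist_comm (u := z), T.dist_comm (v := y)] at hz2
    have : z = u := hT.eq_of_adj_of_dist (r := x) hz1 ha'.symm (by omega) (by omega)
    subst this
    omega

lemma exists_walk_induce (hT : T.IsTree) (hadj : T.Adj x y) (n : ℕ) (u : {w : V | w ≠ y})
    (hu : T.dist y u = T.dist x u + 1) (hn : T.dist x u = n) :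
    ∃ q : (T.induce {w | w ≠ y}).Walk u ⟨x, T.ne_of_adj hadj⟩, q.length = n := by
  induction n generalizing u with
  | zero =>
    obtain ⟨u, h⟩ := u
    obtain rfl : x = u := hT.connected.dist_eq_zero_iff.1 hn
    exact ⟨.nil, rfl⟩
  | succ n ih =>
    have hne : (u : V) ≠ x := by
      intro e
      rw [e, T.dist_self] at hn
      omega
    obtain ⟨z, hz1, hz2⟩ := hT.connected.exists_adj_dist_add_one hne
    rw [T.dist_comm, T.dist_comm (v := x)] at hz2
    have e1 := hT.connected.dist_triangle (u := y) (v := z) (w := u)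
    rw [dist_eq_one_iff_adj.2 hz1.symm] at e1
    have e2 := hT.connected.dist_triangle (u := y) (v := x) (w := z)
    rw [dist_eq_one_iff_adj.2 hadj.symm] at e2
    have hzy : z ≠ y := by
      rintro rfl
      rw [T.dist_self] at e1
      omega
    obtain ⟨q, hq⟩ := ih ⟨z, hzy⟩ (by simp only; omega) (by simp only; omega)
    have ha : (T.induce {w | w ≠ y}).Adj u ⟨z, hzy⟩ := hz1
    exact ⟨.cons ha q, by simp [hq]⟩

lemma dist_induce_eq (hT : T.IsTree) (hadj : T.Adj x y) (u : {w : V | w ≠ y})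
    (hu : T.dist y u = T.dist x u + 1) :
    (T.induce {w | w ≠ y}).dist ⟨x, T.ne_of_adj hadj⟩ u = T.dist x u := by
  obtain ⟨q, hq⟩ := exists_walk_induce hT hadj _ u hu rfl
  apply le_antisymm
  · rw [SimpleGraph.dist_comm, ← hq]
    exact dist_le q
  · obtain ⟨q', hq'⟩ := q.reverse.reachable.exists_walk_length_eq_dist
    rw [← hq', ← Walk.length_map (Embedding.induce {w | w ≠ y}).toHom q']
    exact dist_le _

lemma dist_induce_pos (hT : T.IsTree) (hadj : T.Adj x y) (u : {w : V | w ≠ y})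
    (hu : 0 < (T.induce {w | w ≠ y}).dist ⟨x, T.ne_of_adj hadj⟩ u) :
    T.dist y u = T.dist x u + 1 := by
  obtain ⟨q⟩ := Reachable.of_dist_ne_zero hu.ne'
  refine dist_eq_of_reachable_induce hT hadj q ?_
  simpa using hadj.symm

end DeleteVertex

/-- The eccentricity of `x` in the component of `T - y` containing `x`. -/
noncomputable def branchEcc {V : Type} (T : SimpleGraph V) (x y : V) (hxy : x ≠ y) : ℕ :=
  ⨆ u : {w : V // w ≠ y}, (T.induce {w | w ≠ y}).dist ⟨x, hxy⟩ u

section Branch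

variable {V : Type} [Fintype V] {T : SimpleGraph V} {x y : V}

lemma le_branchEcc (hT : T.IsTree) (hadj : T.Adj x y) {u : V} (hu : T.dist y u = T.dist x u + 1) :
    T.dist x u ≤ branchEcc T x y hadj.ne := by
  have huy : u ≠ y := by rintro rfl; simp at hu
  rw [← dist_induce_eq hT hadj ⟨u, huy⟩ hu]
  exact le_ciSup (f := fun u : {w : V // w ≠ y} =>
    (T.induce {w | w ≠ y}).dist ⟨x, hadj.ne⟩ u) (Set.finite_range _).bddAbove ⟨u, huy⟩

lemma exists_dist_eq_branchEcc (hT : T.IsTree) (hadj : T.Adj x y) :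
    ∃ u, T.dist y u = T.dist x u + 1 ∧ T.dist x u = branchEcc T x y hadj.ne := by
  have : Nonempty {w : V // w ≠ y} := ⟨x, hadj.ne⟩
  obtain ⟨u, hu⟩ := exists_eq_ciSup_of_finite (f := fun u : {w : V // w ≠ y} =>
    (T.induce {w | w ≠ y}).dist ⟨x, hadj.ne⟩ u)
  change _ = branchEcc T x y hadj.ne at hu
  rcases Nat.eq_zero_or_pos (branchEcc T x y hadj.ne) with h0 | h0
  · exact ⟨x, by simpa using hadj.symm, by simp [h0]⟩
  · have hd := dist_induce_pos hT hadj u (by rw [← hu] at h0; exact h0)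
    exact ⟨u, hd, by rw [← dist_induce_eq hT hadj u hd]; exact hu⟩

lemma treeHeight_lt_branchEcc (hT : T.IsTree) (hadj : T.Adj x y) {c : V} (hcx : c ≠ x)
    (hcy : c ≠ y) (hc : treeParent T x c = x) :
    treeHeight T x c + 1 ≤ branchEcc T x y hadj.ne := by
  obtain ⟨w, h1, h2⟩ := exists_dist_eq_treeHeight T x c
  have hca := (treeParent_spec hT.connected hcx).1
  rw [hc] at hca
  rw [dist_eq_one_iff_adj.2 hca.symm] at h1
  have h3 := hT.dist_eq_dist_add_one_of_adj w hadj
  rw [T.dist_comm, T.dist_comm (v := y)] at h3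
  rcases h3 with h3 | h3
  · refine absurd (hT.eq_of_adj_of_dist (r := w) hca.symm hadj ?_ ?_) hcy
    · rw [T.dist_comm, T.dist_comm (v := x)]; omega
    · rw [T.dist_comm, T.dist_comm (v := x)]; omega
  · have := le_branchEcc hT hadj h3
    omega

lemma exists_child_branchEcc (hT : T.IsTree) (hadj : T.Adj x y)
    (hpos : 0 < branchEcc T x y hadj.ne) :
    ∃ c, c ≠ x ∧ c ≠ y ∧ treeParent T x c = x ∧
      treeHeight T x c + 1 = branchEcc T x y hadj.ne := by
  obtain ⟨u, h1, h2⟩ := exists_dist_eq_branchEcc hT hadj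
  have hxu : x ≠ u := by rintro rfl; rw [T.dist_self] at h2; omega
  obtain ⟨c, hc, h3, h4, h5⟩ := exists_child_towards hT (r := x) hxu (by simp)
  have hcy : c ≠ y := by rintro rfl; omega
  have := treeHeight_lt_branchEcc hT hadj hc hcy h3
  exact ⟨c, hc, hcy, h3, by omega⟩

omit [Fintype V] in
lemma treeParent_adj (hT : T.IsTree) (hadj : T.Adj x y) : treeParent T x y = x :=
  treeParent_eq hT hadj.symm (by simpa using (dist_eq_one_iff_adj.2 hadj).symm)

lemma dist_le_eccG (T : SimpleGraph V) (u v : V) : T.dist u v ≤ eccG T u :=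
  le_ciSup (f := T.dist u) (Set.finite_range _).bddAbove v

lemma treeHeight_root (hT : T.IsTree) (hadj : T.Adj x y) (hecc : eccG T y ≤ eccG T x) :
    treeHeight T x x = treeHeight T x y + 1 ∧
      branchEcc T x y hadj.ne + 1 ≤ treeHeight T x x := by
  have : Nonempty V := ⟨x⟩
  obtain ⟨z, hz⟩ := exists_eq_ciSup_of_finite (f := T.dist x)
  change _ = eccG T x at hz
  obtain ⟨u, h1, h2⟩ := exists_dist_eq_branchEcc hT hadj
  have h3 := dist_le_eccG T y u
  have h4 := dist_le_eccG T y z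
  have h5 := hT.dist_eq_dist_add_one_of_adj z hadj
  rw [T.dist_comm, T.dist_comm (v := y)] at h5
  have h6 : T.dist x z = T.dist y z + 1 := by omega
  have hxy := dist_eq_one_iff_adj.2 hadj
  have h7 := le_treeHeight (T := T) (r := x) (v := y) (w := z) (by omega)
  have h8 := treeHeight_lt_parent hT.connected hadj.ne'
  rw [treeParent_adj hT hadj] at h8
  obtain ⟨w, -, h9⟩ := exists_dist_eq_treeHeight T x x
  have h10 := dist_le_eccG T x w
  omega

variable [DecidableEq V]

lemma rootedBy_subdivision (hT : T.IsTree) (hadj : T.Adj x y) (hecc : eccG T y ≤ eccG T x)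
    {T' : SimpleGraph (Option V)}
    (hsub₁ : ∀ a b : V, T'.Adj (some a) (some b) ↔
      (T.Adj a b ∧ ¬(a = x ∧ b = y) ∧ ¬(a = y ∧ b = x)))
    (hsub₂ : ∀ a : V, T'.Adj none (some a) ↔ (a = x ∨ a = y)) :
    RootedBy T' none
      (fun v => v.bind fun a => if a = x ∨ a = y then none else some (treeParent T x a))
      (fun v => v.elim (treeHeight T x x)
        fun a => if a = x then branchEcc T x y hadj.ne else treeHeight T x a) := by
  have H := rootedBy_tree hT x
  obtain ⟨hr1, hr2⟩ := treeHeight_root hT hadj hecc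
  have hpy := treeParent_adj hT hadj
  have hxy := hadj.ne
  constructor
  · intro u v
    cases u with
    | none =>
      cases v with
      | none => simp
      | some b => simp [hsub₂, or_iff_not_imp_left]
    | some a =>
      cases v with
      | none => rw [T'.adj_comm]; simp [hsub₂, or_iff_not_imp_left]
      | some b =>
        rw [hsub₁, H.adj_iff]
        by_cases ha : a = x <;> by_cases hb : b = x <;> by_cases ha' : a = y <;>
          by_cases hb' : b = y <;> grind
  · intro v hv
    cases v with
    | none => exact absurd rfl hv
    | some a =>
      have := H.height_lt a
      by_cases ha : a = x
      · simp [ha, hr2]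
      · by_cases hay : a = y
        · simp [hay, hxy.symm, hr1]
        · simp only [Option.bind_some, Option.elim_some, ha, hay, or_self, if_false]
          by_cases hp : treeParent T x a = x
          · simpa [hp] using treeHeight_lt_branchEcc hT hadj ha hay hp
          · simpa [hp] using this ha
  · intro v hv
    cases v with
    | none => exact ⟨some y, by simp, by simp, by simp [hxy.symm, hr1]⟩
    | some a =>
      by_cases ha : a = x
      · subst ha
        simp only [Option.elim_some, if_true] at hv ⊢
        obtain ⟨c, h1, h2, h3, h4⟩ := exists_child_branchEcc hT hadj hv
        exact ⟨some c, by simp, by simp [h1, h2, h3], by simp [h1, h4]⟩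
      · simp only [Option.elim_some, ha, if_false] at hv ⊢
        obtain ⟨c, h1, h2, h3⟩ := H.exists_child a hv
        have hcy : c ≠ y := by
          rintro rfl
          exact ha (h2.symm.trans hpy)
        exact ⟨some c, by simp, by simp [h1, h2, hcy], by simp [h1, h3]⟩

end Branch

/-- subdividing a non-pendant edge `e = xy` (with `ecc(x) ≥ ecc(y)`)
of a tree `T` by a new vertex `r` gives `π_t(T',r) = π_t(T,x) + 2^a`, where `a` is
the eccentricity of `x` in the component of `T − y` containing `x`.
The subdivided tree `T'` lives on `Option V`, with `none` playing the role of the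
new vertex `r`. -/
theorem tree_subdivision_pebbling {V : Type} [Fintype V] [DecidableEq V]
    (T : SimpleGraph V) [DecidableRel T.Adj] (hconn : T.Connected) (hac : T.IsAcyclic)
    (x y : V) (hadj : T.Adj x y)
    (hx : 2 ≤ T.degree x) (hy : 2 ≤ T.degree y)
    (hecc : eccG T y ≤ eccG T x)
    (T' : SimpleGraph (Option V))
    (hsub₁ : ∀ a b : V, T'.Adj (some a) (some b) ↔
      (T.Adj a b ∧ ¬(a = x ∧ b = y) ∧ ¬(a = y ∧ b = x)))
    (hsub₂ : ∀ a : V, T'.Adj none (some a) ↔ (a = x ∨ a = y))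
    (t : ℕ) (ht : 1 ≤ t) :
    piT T' none t =
      piT T x t +
        2 ^ (⨆ u : {w : V // w ≠ y},
          (T.induce {w | w ≠ y}).dist ⟨x, (T.ne_of_adj hadj)⟩ u) := by
  have hT : T.IsTree := ⟨hconn, hac⟩
  change _ = _ + 2 ^ branchEcc T x y hadj.ne
  rw [(rootedBy_subdivision hT hadj hecc hsub₁ hsub₂).piT_eq ht, (rootedBy_tree hT x).piT_eq ht]
  have e1 : ∑ v : Option V with v ≠ none, 2 ^ (v.elim (treeHeight T x x)
        fun a => if a = x then branchEcc T x y hadj.ne else treeHeight T x a) =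
      2 ^ branchEcc T x y hadj.ne + ∑ v with v ≠ x, 2 ^ treeHeight T x v := by
    rw [Finset.sum_filter, Fintype.sum_option, Finset.filter_ne',
      ← Finset.add_sum_erase _ _ (Finset.mem_univ x)]
    simp only [ne_eq, not_true_eq_false, if_false, reduceCtorEq, not_false_eq_true, if_true,
      Option.elim_some, zero_add]
    congr 1
    refine Finset.sum_congr rfl fun v hv => ?_
    simp [Finset.ne_of_mem_erase hv]
  rw [e1]
  simp only [Option.elim_none]
  ring
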